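/- Let V be a variety with 0⃗ & 1⃗. If V has the Weak Determining Property, then V has Boolean Factor Congruences. -/

import Mathlib

open FirstOrder Language

universe u v w

namespace Paper

variable {L : FirstOrder.Language.{v, w}}

/-- The direct product of two `L`-structures, with pointwise operations. -/
instance prodStructure (A : Type*) (B : Type*) [L.Structure A] [L.Structure B] :
    L.Structure (A × B) where
  funMap f x := (Structure.funMap f fun i => (x i).1, Structure.funMap f fun i => (x i).2)
  RelMap r x := Structure.RelMap r (fun i => (x i).1) ∧ Structure.RelMap r fun i => (x i).2

/-- The interpretation of a closed term in an algebra. -/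
def interp (A : Type u) [L.Structure A] (t : L.Term Empty) : A := t.realize Empty.elim

/-- A congruence of an `L`-structure: an equivalence relation compatible with all
basic operations. -/
structure Congruence (L : FirstOrder.Language.{v, w}) (A : Type u) [L.Structure A] where
  rel : A → A → Prop
  refl : ∀ a, rel a a
  symm : ∀ {a b}, rel a b → rel b a
  trans : ∀ {a b c}, rel a b → rel b c → rel a c
  compat : ∀ {n} (f : L.Functions n) (x y : Fin n → A),
    (∀ i, rel (x i) (y i)) → rel (Structure.funMap f x) (Structure.funMap f y)

variable {A : Type u} [L.Structure A]

/-- `θ ⋄ θ* = Δ` : `θ ∩ θ* = Δ` and `θ ∘ θ* = ∇`. -/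
def Complementary (θ θ' : Congruence L A) : Prop :=
  (∀ a b : A, θ.rel a b → θ'.rel a b → a = b) ∧ ∀ a b : A, ∃ c : A, θ.rel a c ∧ θ'.rel c b

/-- A factor congruence: the kernel of a projection onto a direct factor,
equivalently a congruence possessing a complementary factor congruence. -/
def IsFactorCongruence (θ : Congruence L A) : Prop := ∃ θ' : Congruence L A, Complementary θ θ'

/-- The meet of two congruences. -/
def Congruence.inf (θ φ : Congruence L A) : Congruence L A where
  rel a b := θ.rel a b ∧ φ.rel a b
  refl a := ⟨θ.refl a, φ.refl a⟩
  symm h := ⟨θ.symm h.1, φ.symm h.2⟩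
  trans h h' := ⟨θ.trans h.1 h'.1, φ.trans h.2 h'.2⟩
  compat f x y h := ⟨θ.compat f x y fun i => (h i).1, φ.compat f x y fun i => (h i).2⟩

/-- The order on congruences. -/
def Congruence.le (θ φ : Congruence L A) : Prop := ∀ a b : A, θ.rel a b → φ.rel a b

/-- The join of two congruences in the congruence lattice. -/
def Congruence.sup (θ φ : Congruence L A) : Congruence L A where
  rel a b := ∀ ψ : Congruence L A, θ.le ψ → φ.le ψ → ψ.rel a b
  refl a ψ _ _ := ψ.refl a
  symm h ψ h1 h2 := ψ.symm (h ψ h1 h2)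
  trans h h' ψ h1 h2 := ψ.trans (h ψ h1 h2) (h' ψ h1 h2)
  compat f x y h ψ h1 h2 := ψ.compat f x y fun i => h i ψ h1 h2

/-- A theory is equational when each axiom is a universally quantified equation. -/
def IsEquational (T : L.Theory) : Prop :=
  ∀ φ ∈ T, ∃ (n : ℕ) (t₁ t₂ : L.Term (Empty ⊕ Fin n)), φ = (t₁.bdEqual t₂).alls

/-- `Mod(T)` is a variety with `0⃗` & `1⃗`, witnessed by closed terms `z`, `o`. -/
def HasZeroOne (T : L.Theory) {l : ℕ} (z o : Fin l → L.Term Empty) : Prop :=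
  ∀ (A : Type u) [L.Structure A], A ⊨ T → Nonempty A →
    (∀ i, interp A (z i) = interp A (o i)) → ∀ x y : A, x = y

variable {l : ℕ} (z o : Fin l → L.Term Empty)

/-- `0⃗ θ e⃗ θ* 1⃗`. -/
def Between (θ θ' : Congruence L A) (e : Fin l → A) : Prop :=
  (∀ i, θ.rel (interp A (z i)) (e i)) ∧ ∀ i, θ'.rel (e i) (interp A (o i))

/-- `e⃗` is a central element of `A`. -/
def IsCentral (e : Fin l → A) : Prop :=
  ∃ (A₁ : Type u) (A₂ : Type u) (_ : L.Structure A₁) (_ : L.Structure A₂)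
    (g : A ≃[L] A₁ × A₂), ∀ i, g (e i) = (interp A₁ (z i), interp A₂ (o i))

/-- `e⃗` and `f⃗` are complementary central elements of `A`. -/
def AreComplementaryCentral (e f : Fin l → A) : Prop :=
  ∃ (A₁ : Type u) (A₂ : Type u) (_ : L.Structure A₁) (_ : L.Structure A₂)
    (g : A ≃[L] A₁ × A₂),
      (∀ i, g (e i) = (interp A₁ (z i), interp A₂ (o i))) ∧
      (∀ i, g (f i) = (interp A₁ (o i), interp A₂ (z i)))

variable (T : L.Theory)

/-- The Determining Property. -/
def HasDeterminingProperty : Prop :=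
  ∀ (A : Type u) [L.Structure A], A ⊨ T → Nonempty A →
    (∀ θ θ' : Congruence L A, Complementary θ θ' → ∃! e : Fin l → A, Between z o θ θ' e) ∧
    (∀ (θ θ' : Congruence L A) (e : Fin l → A), Complementary θ θ' → Between z o θ θ' e →
      IsCentral z o e) ∧
    (∀ e : Fin l → A, IsCentral z o e →
      ∃! p : Congruence L A × Congruence L A, Complementary p.1 p.2 ∧ Between z o p.1 p.2 e)

/-- The Weak Determining Property. -/
def HasWeakDeterminingProperty : Prop :=
  ∀ (A : Type u) [L.Structure A], A ⊨ T → Nonempty A →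
    (∀ θ θ' : Congruence L A, Complementary θ θ' →
      ∃! p : (Fin l → A) × (Fin l → A), Between z o θ θ' p.1 ∧ Between o z θ θ' p.2) ∧
    (∀ (θ θ' : Congruence L A) (e f : Fin l → A), Complementary θ θ' →
      Between z o θ θ' e → Between o z θ θ' f → AreComplementaryCentral z o e f) ∧
    (∀ e f : Fin l → A, AreComplementaryCentral z o e f →
      ∃! p : Congruence L A × Congruence L A,
        Complementary p.1 p.2 ∧ Between z o p.1 p.2 e ∧ Between o z p.1 p.2 f)

/-- Definable Factor Congruences. -/
def HasDFC : Prop :=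
  ∃ Φ : L.Formula (Fin 2 ⊕ Fin l),
    ∀ (A : Type u) (B : Type u) [L.Structure A] [L.Structure B],
      A ⊨ T → B ⊨ T → Nonempty A → Nonempty B →
        ∀ (a c : A) (b d : B),
          Φ.Realize (Sum.elim (![((a, b) : A × B), (c, d)])
            fun i => ((interp A (z i), interp B (o i)) : A × B)) ↔ a = c

/-- Definability with both `[0⃗,1⃗]` and `[1⃗,0⃗]` as parameters. -/
def HasDFC' : Prop :=
  ∃ Φ : L.Formula (Fin 2 ⊕ (Fin l ⊕ Fin l)),
    ∀ (A : Type u) (B : Type u) [L.Structure A] [L.Structure B],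
      A ⊨ T → B ⊨ T → Nonempty A → Nonempty B →
        ∀ (a c : A) (b d : B),
          Φ.Realize (Sum.elim (![((a, b) : A × B), (c, d)])
            (Sum.elim (fun i => ((interp A (z i), interp B (o i)) : A × B))
              fun i => ((interp A (o i), interp B (z i)) : A × B))) ↔ a = c

/-- Boolean Factor Congruences. -/
def HasBFC : Prop :=
  ∀ (A : Type u) [L.Structure A], A ⊨ T → Nonempty A →
    (∀ θ φ : Congruence L A, IsFactorCongruence θ → IsFactorCongruence φ →
      IsFactorCongruence (θ.inf φ) ∧ IsFactorCongruence (θ.sup φ)) ∧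
    (∀ θ φ ψ : Congruence L A, IsFactorCongruence θ → IsFactorCongruence φ →
      IsFactorCongruence ψ →
        (θ.inf (φ.sup ψ)).rel = ((θ.inf φ).sup (θ.inf ψ)).rel)

end Paper

/-!
Two complementary factor congruences `θ`, `θ'` split `A` as a product, in which the decomposition
operation `d` sends `(x₁, x₂)` and `(y₁, y₂)` to `(x₁, y₂)`. The map `(x, y) ↦ (d x y, d y x)` is
an automorphism of `A × A` that fixes the diagonal, and every pair of complementary central
elements coming from a product pair `(φ × φ, φ' × φ')` lies on that diagonal. As such a pair of
central elements determines the factor congruence, the automorphism preserves `φ × φ`, which says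
that `d` preserves `φ`. Factor congruences preserved by all decomposition operations permute and
distribute over one another.
-/

namespace Paper

section Operations

variable {L : FirstOrder.Language.{v, w}} {A B : Type*} [L.Structure A] [L.Structure B]

variable (L) in
/-- Homomorphisms of algebras: maps that commute with the basic operations. Relation symbols are
disregarded, as they are by `Congruence`, which is why this is not `FirstOrder.Language.Hom`. -/
def PreservesOperations (g : A → B) : Prop :=
  ∀ {n} (f : L.Functions n) (x : Fin n → A),
    g (Structure.funMap f x) = Structure.funMap f (g ∘ x)

lemma preservesOperations_fst : PreservesOperations L (Prod.fst : A × B → A) := fun _ _ => rfl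

lemma preservesOperations_snd : PreservesOperations L (Prod.snd : A × B → B) := fun _ _ => rfl

lemma PreservesOperations.map_realize {g : A → B} (hg : PreservesOperations L g) {α : Type*}
    (t : L.Term α) (x : α → A) : g (t.realize x) = t.realize (g ∘ x) := by
  induction t with
  | var => rfl
  | func f ts ih => exact (hg f _).trans (congrArg (Structure.funMap f) (funext ih))

lemma PreservesOperations.map_interp {g : A → B} (hg : PreservesOperations L g)
    (t : L.Term Empty) : g (interp A t) = interp B t :=
  (hg.map_realize t _).trans (congrArg t.realize (Subsingleton.elim _ _))

lemma interp_prod (t : L.Term Empty) : interp (A × B) t = (interp A t, interp B t) :=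
  Prod.ext (preservesOperations_fst.map_interp t) (preservesOperations_snd.map_interp t)

lemma PreservesOperations.map_realize_sumElim {g : A → B} (hg : PreservesOperations L g) {n : ℕ}
    (t : L.Term (Empty ⊕ Fin n)) (x : Fin n → A) :
    g (t.realize (Sum.elim default x)) = t.realize (Sum.elim default (g ∘ x)) := by
  rw [hg.map_realize, Sum.comp_elim, Subsingleton.elim (g ∘ default) default]

lemma IsEquational.model_prod {T : L.Theory} (hT : IsEquational T) (hA : A ⊨ T) (hB : B ⊨ T) :
    (A × B) ⊨ T := by
  refine ⟨fun φ hφ => ?_⟩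
  have hφA := hA.realize_of_mem φ hφ
  have hφB := hB.realize_of_mem φ hφ
  obtain ⟨n, t₁, t₂, rfl⟩ := hT φ hφ
  simp only [Sentence.Realize, BoundedFormula.realize_alls,
    BoundedFormula.realize_bdEqual] at hφA hφB ⊢
  intro x
  apply Prod.ext
  · simpa only [preservesOperations_fst.map_realize_sumElim] using hφA (Prod.fst ∘ x)
  · simpa only [preservesOperations_snd.map_realize_sumElim] using hφB (Prod.snd ∘ x)

end Operations

section Congruences

variable {L : FirstOrder.Language.{v, w}} {A B : Type*} [L.Structure A] [L.Structure B]

namespace Congruence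

lemma le_sup_left (θ φ : Congruence L A) : θ.le (θ.sup φ) := fun _ _ h _ hθ _ => hθ _ _ h

lemma le_sup_right (θ φ : Congruence L A) : φ.le (θ.sup φ) := fun _ _ h _ _ hφ => hφ _ _ h

lemma sup_le {θ φ ψ : Congruence L A} (hθ : θ.le ψ) (hφ : φ.le ψ) : (θ.sup φ).le ψ :=
  fun _ _ h => h ψ hθ hφ

lemma sup_rel_of_rel {θ φ : Congruence L A} {a b c : A} (hθ : θ.rel a b) (hφ : φ.rel b c) :
    (θ.sup φ).rel a c :=
  (θ.sup φ).trans (le_sup_left θ φ _ _ hθ) (le_sup_right θ φ _ _ hφ)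

lemma sup_inf_le (θ φ ψ : Congruence L A) :
    ((θ.inf φ).sup (θ.inf ψ)).le (θ.inf (φ.sup ψ)) :=
  sup_le (fun _ _ h => ⟨h.1, le_sup_left φ ψ _ _ h.2⟩)
    fun _ _ h => ⟨h.1, le_sup_right φ ψ _ _ h.2⟩

lemma comp_of_sup_rel {θ φ : Congruence L A}
    (hperm : Relation.Comp φ.rel θ.rel ≤ Relation.Comp θ.rel φ.rel) {a b : A}
    (h : (θ.sup φ).rel a b) : Relation.Comp θ.rel φ.rel a b := by
  let ψ : Congruence L A :=
    { rel := Relation.Comp θ.rel φ.rel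
      refl := fun a => ⟨a, θ.refl a, φ.refl a⟩
      symm := fun ⟨c, hac, hcb⟩ => hperm _ _ ⟨c, φ.symm hcb, θ.symm hac⟩
      trans := fun ⟨_, hθ, hφ⟩ ⟨_, hθ', hφ'⟩ => by
        obtain ⟨u, hu, hu'⟩ := hperm _ _ ⟨_, hφ, hθ'⟩
        exact ⟨u, θ.trans hθ hu, φ.trans hu' hφ'⟩
      compat := fun f x y h => by
        choose c hθ hφ using h
        exact ⟨_, θ.compat f _ _ hθ, φ.compat f _ _ hφ⟩ }
  exact h ψ (fun _ b h => ⟨b, h, φ.refl b⟩) fun a _ h => ⟨a, θ.refl a, h⟩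

/-- The preimage of a congruence under a homomorphism of algebras. -/
def comap (φ : Congruence L B) (g : A → B) (hg : PreservesOperations L g) : Congruence L A where
  rel a b := φ.rel (g a) (g b)
  refl _ := φ.refl _
  symm h := φ.symm h
  trans h h' := φ.trans h h'
  compat f x y h := by
    rw [hg, hg]
    exact φ.compat f _ _ h

/-- The product congruence `θ × φ` on `A × B`. -/
def prod (θ : Congruence L A) (φ : Congruence L B) : Congruence L (A × B) :=
  (θ.comap Prod.fst preservesOperations_fst).inf (φ.comap Prod.snd preservesOperations_snd)

end Congruence

namespace Complementary

lemma symm {θ θ' : Congruence L A} (h : Complementary θ θ') : Complementary θ' θ := by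
  refine ⟨fun a b h₁ h₂ => h.1 a b h₂ h₁, fun a b => ?_⟩
  obtain ⟨c, hbc, hca⟩ := h.2 b a
  exact ⟨c, θ'.symm hca, θ.symm hbc⟩

lemma comap {φ φ' : Congruence L B} (h : Complementary φ φ') {g : A → B}
    (hg : PreservesOperations L g) (hbij : g.Bijective) :
    Complementary (φ.comap g hg) (φ'.comap g hg) := by
  refine ⟨fun a b h₁ h₂ => hbij.1 (h.1 _ _ h₁ h₂), fun a b => ?_⟩
  obtain ⟨c, hac, hcb⟩ := h.2 (g a) (g b)
  obtain ⟨c, rfl⟩ := hbij.2 c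
  exact ⟨c, hac, hcb⟩

lemma prod {θ θ' : Congruence L A} {φ φ' : Congruence L B} (hθ : Complementary θ θ')
    (hφ : Complementary φ φ') : Complementary (θ.prod φ) (θ'.prod φ') := by
  refine ⟨fun p q h h' => Prod.ext (hθ.1 _ _ h.1 h'.1) (hφ.1 _ _ h.2 h'.2), fun p q => ?_⟩
  obtain ⟨a, hpa, haq⟩ := hθ.2 p.1 q.1
  obtain ⟨b, hpb, hbq⟩ := hφ.2 p.2 q.2
  exact ⟨(a, b), ⟨hpa, hpb⟩, haq, hbq⟩

lemma exists_between {l : ℕ} {θ θ' : Congruence L A} (h : Complementary θ θ')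
    (z o : Fin l → L.Term Empty) : ∃ e : Fin l → A, Between z o θ θ' e := by
  choose e hze heo using fun i => h.2 (interp A (z i)) (interp A (o i))
  exact ⟨e, hze, heo⟩

end Complementary

lemma Between.comap {l : ℕ} {z o : Fin l → L.Term Empty} {φ φ' : Congruence L B} {g : A → B}
    (hg : PreservesOperations L g) {e : Fin l → A} (h : Between z o φ φ' (g ∘ e)) :
    Between z o (φ.comap g hg) (φ'.comap g hg) e := by
  simpa only [Between, Congruence.comap, hg.map_interp, Function.comp_apply] using h

lemma Between.prod {l : ℕ} {z o : Fin l → L.Term Empty} {θ θ' : Congruence L A}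
    {φ φ' : Congruence L B} {a : Fin l → A} {b : Fin l → B}
    (ha : Between z o θ θ' a) (hb : Between z o φ φ' b) :
    Between z o (θ.prod φ) (θ'.prod φ') fun i => (a i, b i) := by
  constructor <;> intro i <;> rw [interp_prod]
  · exact ⟨ha.1 i, hb.1 i⟩
  · exact ⟨ha.2 i, hb.2 i⟩

end Congruences

namespace Complementary

variable {L : FirstOrder.Language.{v, w}} {A : Type*} [L.Structure A] {θ θ' : Congruence L A}
  {x y : A}

/-- The decomposition operation of a pair of complementary factor congruences: `h.dec x y` is the
unique element that is `θ`-related to `x` and `θ'`-related to `y`. -/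
noncomputable def dec (h : Complementary θ θ') (x y : A) : A := (h.2 x y).choose

lemma rel_dec (h : Complementary θ θ') (x y : A) : θ.rel x (h.dec x y) :=
  (h.2 x y).choose_spec.1

lemma dec_rel (h : Complementary θ θ') (x y : A) : θ'.rel (h.dec x y) y :=
  (h.2 x y).choose_spec.2

lemma dec_eq (h : Complementary θ θ') {c : A} (hxc : θ.rel x c) (hcy : θ'.rel c y) :
    h.dec x y = c :=
  h.1 _ _ (θ.trans (θ.symm (h.rel_dec x y)) hxc) (θ'.trans (h.dec_rel x y) (θ'.symm hcy))

lemma dec_eq_left (h : Complementary θ θ') (hxy : θ'.rel x y) : h.dec x y = x :=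
  h.dec_eq (θ.refl x) hxy

lemma dec_eq_right (h : Complementary θ θ') (hxy : θ.rel x y) : h.dec x y = y :=
  h.dec_eq hxy (θ'.refl y)

lemma dec_self (h : Complementary θ θ') (x : A) : h.dec x x = x := h.dec_eq_left (θ'.refl x)

lemma dec_dec_swap (h : Complementary θ θ') (x y : A) :
    h.dec (h.dec x y) (h.dec y x) = x :=
  h.dec_eq (θ.symm (h.rel_dec x y)) (θ'.symm (h.dec_rel y x))

lemma dec_funMap (h : Complementary θ θ') {n : ℕ} (f : L.Functions n) (x y : Fin n → A) :
    h.dec (Structure.funMap f x) (Structure.funMap f y) =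
      Structure.funMap f fun i => h.dec (x i) (y i) :=
  h.dec_eq (θ.compat f _ _ fun _ => h.rel_dec _ _) (θ'.compat f _ _ fun _ => h.dec_rel _ _)

/-- The automorphism of `A × A` that, for the splitting of `A` given by `θ` and `θ'`, exchanges
the second coordinates of the two arguments. -/
noncomputable def twist (h : Complementary θ θ') (p : A × A) : A × A :=
  (h.dec p.1 p.2, h.dec p.2 p.1)

lemma twist_diag (h : Complementary θ θ') (a : A) : h.twist (a, a) = (a, a) :=
  Prod.ext (h.dec_self a) (h.dec_self a)

lemma twist_involutive (h : Complementary θ θ') : Function.Involutive h.twist :=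
  fun p => Prod.ext (h.dec_dec_swap p.1 p.2) (h.dec_dec_swap p.2 p.1)

lemma preservesOperations_twist (h : Complementary θ θ') : PreservesOperations L h.twist :=
  fun f _ => Prod.ext (h.dec_funMap f _ _) (h.dec_funMap f _ _)

end Complementary

section Determined

variable {L : FirstOrder.Language.{v, w}} {l : ℕ} {z o : Fin l → L.Term Empty}

/-- The injectivity half of the Weak Determining Property for a single algebra: complementary
factor congruences with the same pair of associated central elements coincide. It suffices to
speak of the first components, since the two components play symmetric roles. -/
def FactorPairsDetermined (z o : Fin l → L.Term Empty) (A : Type*) [L.Structure A] : Prop :=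
  ∀ {θ θ' φ φ' : Congruence L A} {e f : Fin l → A}, Complementary θ θ' → Complementary φ φ' →
    Between z o θ θ' e → Between o z θ θ' f → Between z o φ φ' e → Between o z φ φ' f → θ = φ

lemma HasWeakDeterminingProperty.factorPairsDetermined {T : L.Theory}
    (hW : HasWeakDeterminingProperty.{u} z o T) {A : Type u} [L.Structure A] (hA : A ⊨ T)
    (hne : Nonempty A) : FactorPairsDetermined z o A := by
  intro θ θ' φ φ' e f hθ hφ hθe hθf hφe hφf
  obtain ⟨-, central, unique_pair⟩ := hW A hA hne
  have hpair : (θ, θ') = (φ, φ') :=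
    (unique_pair e f (central θ θ' e f hθ hθe hθf)).unique ⟨hθ, hθe, hθf⟩ ⟨hφ, hφe, hφf⟩
  exact congrArg Prod.fst hpair

variable {A : Type*} [L.Structure A]

lemma FactorPairsDetermined.comap_eq_self (hdet : FactorPairsDetermined z o A)
    {φ φ' : Congruence L A} (hφ : Complementary φ φ') {e f : Fin l → A}
    (he : Between z o φ φ' e) (hf : Between o z φ φ' f) {g : A → A}
    (hg : PreservesOperations L g) (hbij : g.Bijective) (hge : g ∘ e = e) (hgf : g ∘ f = f) :
    φ.comap g hg = φ :=
  hdet (hφ.comap hg hbij) hφ (Between.comap hg (hge.symm ▸ he)) (Between.comap hg (hgf.symm ▸ hf))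
    he hf

variable (L A) in
/-- Every factor congruence is compatible with the decomposition operation of every pair of
complementary factor congruences. -/
def DecompositionsPreserveFactors : Prop :=
  ∀ {θ θ' φ : Congruence L A} (hθ : Complementary θ θ'), IsFactorCongruence φ →
    ∀ {x y x' y' : A}, φ.rel x x' → φ.rel y y' → φ.rel (hθ.dec x y) (hθ.dec x' y')

lemma FactorPairsDetermined.decompositionsPreserveFactors
    (hdet : FactorPairsDetermined z o (A × A)) : DecompositionsPreserveFactors L A := by
  rintro θ θ' φ hθ ⟨φ', hφ⟩ x y x' y' hx hy
  obtain ⟨e, he⟩ := hφ.exists_between z o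
  obtain ⟨f, hf⟩ := hφ.exists_between o z
  have htwist : (φ.prod φ).comap hθ.twist hθ.preservesOperations_twist = φ.prod φ :=
    hdet.comap_eq_self (hφ.prod hφ) (he.prod he) (hf.prod hf) hθ.preservesOperations_twist
      hθ.twist_involutive.bijective (funext fun i => hθ.twist_diag (e i))
      (funext fun i => hθ.twist_diag (f i))
  have hpair : (φ.prod φ).rel (x, y) (x', y') := ⟨hx, hy⟩
  rw [← htwist] at hpair
  exact hpair.1

end Determined

namespace DecompositionsPreserveFactors

variable {L : FirstOrder.Language.{v, w}} {A : Type*} [L.Structure A]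
  {θ θ' φ φ' ψ : Congruence L A}

lemma comp_of_sup_rel (hA : DecompositionsPreserveFactors L A) (hθ : IsFactorCongruence θ)
    (hφ : IsFactorCongruence φ) {a b : A} (h : (θ.sup φ).rel a b) :
    Relation.Comp θ.rel φ.rel a b := by
  obtain ⟨θ', hθ⟩ := hθ
  refine Congruence.comp_of_sup_rel ?_ h
  rintro a c ⟨b, hab, hbc⟩
  have hdec : φ.rel (hθ.dec a c) (hθ.dec b c) := hA hθ hφ hab (φ.refl c)
  rw [hθ.dec_eq_right hbc] at hdec
  exact ⟨hθ.dec a c, hθ.rel_dec a c, hdec⟩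

lemma inf_sup_le (hA : DecompositionsPreserveFactors L A) (hθ : IsFactorCongruence θ)
    (hφ : IsFactorCongruence φ) (hψ : IsFactorCongruence ψ) :
    (θ.inf (φ.sup ψ)).le ((θ.inf φ).sup (θ.inf ψ)) := by
  rintro a b ⟨hab, hsup⟩
  obtain ⟨u, hau, hub⟩ := hA.comp_of_sup_rel hφ hψ hsup
  obtain ⟨θ', hθ⟩ := hθ
  have hφ_dec : φ.rel (hθ.dec a a) (hθ.dec a u) := hA hθ hφ (φ.refl a) hau
  have hψ_dec : ψ.rel (hθ.dec a u) (hθ.dec a b) := hA hθ hψ (ψ.refl a) hub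
  rw [hθ.dec_self] at hφ_dec
  rw [hθ.dec_eq_right hab] at hψ_dec
  have hθ_dec : θ.rel (hθ.dec a u) b := θ.trans (θ.symm (hθ.rel_dec a u)) hab
  exact Congruence.sup_rel_of_rel ⟨hθ.rel_dec a u, hφ_dec⟩ ⟨hθ_dec, hψ_dec⟩

lemma complementary_inf_sup (hA : DecompositionsPreserveFactors L A) (hθ : Complementary θ θ')
    (hφ : Complementary φ φ') : Complementary (θ.inf φ) (θ'.sup φ') := by
  refine ⟨fun a b ⟨hθab, hφab⟩ hsup => hθ.1 a b hθab ?_, fun a b => ?_⟩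
  · have hdistrib : ((φ.inf θ').sup (φ.inf φ')).rel a b :=
      hA.inf_sup_le ⟨φ', hφ⟩ ⟨θ, hθ.symm⟩ ⟨φ, hφ.symm⟩ a b ⟨hφab, hsup⟩
    have hdisjoint : (φ.inf φ').le θ' := fun x y h => hφ.1 x y h.1 h.2 ▸ θ'.refl x
    exact Congruence.sup_le (fun _ _ h => And.right h) hdisjoint a b hdistrib
  · let c := hθ.dec a b
    have hθ_dec : θ.rel (hφ.dec a a) (hφ.dec a c) :=
      hA hφ ⟨θ', hθ⟩ (θ.refl a) (hθ.rel_dec a b)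
    rw [hφ.dec_self] at hθ_dec
    exact ⟨hφ.dec a c, ⟨hθ_dec, hφ.rel_dec a c⟩,
      (θ'.sup φ').trans (Congruence.le_sup_right θ' φ' _ _ (hφ.dec_rel a c))
        (Congruence.le_sup_left θ' φ' _ _ (hθ.dec_rel a b))⟩

lemma isFactorCongruence_inf (hA : DecompositionsPreserveFactors L A)
    (hθ : IsFactorCongruence θ) (hφ : IsFactorCongruence φ) : IsFactorCongruence (θ.inf φ) := by
  obtain ⟨θ', hθ⟩ := hθ
  obtain ⟨φ', hφ⟩ := hφ
  exact ⟨θ'.sup φ', hA.complementary_inf_sup hθ hφ⟩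

lemma isFactorCongruence_sup (hA : DecompositionsPreserveFactors L A)
    (hθ : IsFactorCongruence θ) (hφ : IsFactorCongruence φ) : IsFactorCongruence (θ.sup φ) := by
  obtain ⟨θ', hθ⟩ := hθ
  obtain ⟨φ', hφ⟩ := hφ
  exact ⟨θ'.inf φ', (hA.complementary_inf_sup hθ.symm hφ.symm).symm⟩

lemma inf_sup_rel_eq (hA : DecompositionsPreserveFactors L A) (hθ : IsFactorCongruence θ)
    (hφ : IsFactorCongruence φ) (hψ : IsFactorCongruence ψ) :
    (θ.inf (φ.sup ψ)).rel = ((θ.inf φ).sup (θ.inf ψ)).rel := by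
  ext a b
  exact ⟨hA.inf_sup_le hθ hφ hψ a b, Congruence.sup_inf_le θ φ ψ a b⟩

end DecompositionsPreserveFactors

end Paper

theorem weakDeterminingProperty_hasBFC_general {L : FirstOrder.Language.{v, w}} (T : L.Theory)
    (hT : ∀ (A : Type u) [L.Structure A], A ⊨ T → (A × A) ⊨ T) {l : ℕ}
    (z o : Fin l → L.Term Empty) (hW : Paper.HasWeakDeterminingProperty.{u} z o T) :
    Paper.HasBFC.{u} T := by
  intro A _ hA hne
  have hdet : Paper.FactorPairsDetermined z o (A × A) :=
    hW.factorPairsDetermined (hT A hA) inferInstance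
  have hpres : Paper.DecompositionsPreserveFactors L A := hdet.decompositionsPreserveFactors
  exact ⟨fun θ φ hθ hφ =>
      ⟨hpres.isFactorCongruence_inf hθ hφ, hpres.isFactorCongruence_sup hθ hφ⟩,
    fun θ φ ψ hθ hφ hψ => hpres.inf_sup_rel_eq hθ hφ hψ⟩

/-- **Theorem (1)⇒(5) of the Main Theorem.** If a variety with `0⃗` & `1⃗` has the
Weak Determining Property then it has Boolean Factor Congruences. -/
theorem weakDeterminingProperty_hasBFC {L : FirstOrder.Language.{v, w}}
    (T : L.Theory) (hT : Paper.IsEquational T) {l : ℕ} (z o : Fin l → L.Term Empty)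
    (h01 : Paper.HasZeroOne.{u} T z o)
    (hW : Paper.HasWeakDeterminingProperty.{u} z o T) :
    Paper.HasBFC.{u} T :=
  weakDeterminingProperty_hasBFC_general T (fun _ _ hA => hT.model_prod hA hA) z o hW
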